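/- arXiv:2202.04097 — 3 statements merged into one kernel-verified Lean document; each statement's English description precedes it below -/
import Mathlib

section
/- Let d, m ≥ 1 and let A ∈ ℝ^{d×d}, B ∈ ℝ^{d×m} satisfy the Kalman rank condition. Consider the Hamiltonian matrix 𝕳 ∈ ℝ^{2d×2d} given in block form by 𝕳 = [[A, BBᵀ],[I_d, −Aᵀ]]. Then 𝕳 is hyperbolic: every complex eigenvalue μ of 𝕳 (i.e. every root of its characteristic polynomial over ℂ) satisfies Re(μ) ≠ 0. Moreover, if μ is an eigenvalue of 𝕳, then so is −μ. -/
open Matrix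

noncomputable section

/-- The Kalman controllability matrix `[B, AB, …, A^{d−1}B]`. -/
noncomputable def kalmanMatrix {d m : ℕ} (A : Matrix (Fin d) (Fin d) ℝ)
    (B : Matrix (Fin d) (Fin m) ℝ) : Matrix (Fin d) (Fin d × Fin m) ℝ :=
  fun i p => (A ^ (p.1 : ℕ) * B) i p.2

/-- The Kalman rank condition: `rank [B, AB, …, A^{d−1}B] = d`. -/
def KalmanRankCondition {d m : ℕ} (A : Matrix (Fin d) (Fin d) ℝ)
    (B : Matrix (Fin d) (Fin m) ℝ) : Prop :=
  (kalmanMatrix A B).rank = d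

/-- `μ ∈ ℂ` is an eigenvalue of a real square matrix `M` if it is a root of the
characteristic polynomial of the complexification of `M`. -/
def Matrix.IsComplexEigenvalue {n : Type*} [Fintype n] [DecidableEq n]
    (M : Matrix n n ℝ) (μ : ℂ) : Prop :=
  ((M.map (Complex.ofReal)).charpoly).IsRoot μ

/-- The Hamiltonian matrix `𝕳 = [[A, BBᵀ],[I_d, −Aᵀ]] ∈ ℝ^{2d×2d}` of the LQ
optimality system. -/
noncomputable def hamiltonianMatrix {d m : ℕ} (A : Matrix (Fin d) (Fin d) ℝ)
    (B : Matrix (Fin d) (Fin m) ℝ) : Matrix (Fin d ⊕ Fin d) (Fin d ⊕ Fin d) ℝ :=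
  Matrix.fromBlocks A (B * Bᵀ) 1 (-Aᵀ)

/-!
If `(x, y)` is an eigenvector of `[[A, Q], [P, -Aᴴ]]` with eigenvalue `μ`, where `P` and `Q` are
Hermitian, pairing the first block equation with `y` and the second one with `x` gives
`x⋆Px + y⋆Qy = 2 Re(μ) y⋆x`. When `P` and `Q` are positive semidefinite and `Re μ = 0`, this forces
`Px = 0` and `Qy = 0`, and the equations decouple: `Ax = μx` and `Aᴴy = -μy`. For `P = 1` and
`Q = BBᵀ` we get `x = 0`, and `z = y⋆` is a left eigenvector of `A` with `zB = 0`. Then `zAᵏB = 0`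
for every `k`, so `z = 0` by the Kalman condition, a contradiction.

The symmetry of the spectrum holds because the Hamiltonian matrix is skew-adjoint for the
symplectic form, hence similar to the negative of its transpose.
-/

section Hautus

lemma linearIndependent_row_iff_rank_eq_card {K m n : Type*} [Field K] [Fintype m] [Fintype n]
    (M : Matrix m n K) : LinearIndependent K M.row ↔ M.rank = Fintype.card m := by
  rw [linearIndependent_iff_card_eq_finrank_span, Set.finrank, ← M.rank_eq_finrank_span_row,
    eq_comm]

lemma vecMul_pow_eq_pow_smul {R n : Type*} [CommSemiring R] [Fintype n] [DecidableEq n]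
    {A : Matrix n n R} {z : n → R} {c : R} (hA : z ᵥ* A = c • z) (k : ℕ) :
    z ᵥ* A ^ k = c ^ k • z := by
  induction k with
  | zero => simp
  | succ k ih => rw [pow_succ, ← vecMul_vecMul, ih, smul_vecMul, hA, smul_smul, pow_succ]

variable {d m : ℕ} {A : Matrix (Fin d) (Fin d) ℝ} {B : Matrix (Fin d) (Fin m) ℝ}

lemma map_kalmanMatrix_apply {R : Type*} [CommSemiring R] (f : ℝ →+* R)
    (i : Fin d) (p : Fin d × Fin m) :
    (kalmanMatrix A B).map f i p = (A.map f ^ (p.1 : ℕ) * B.map f) i p.2 := by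
  rw [← Matrix.map_pow, ← Matrix.map_mul]
  rfl

lemma vecMul_map_kalmanMatrix_eq_zero {R : Type*} [CommSemiring R] (f : ℝ →+* R)
    {z : Fin d → R} {c : R} (hA : z ᵥ* A.map f = c • z) (hB : z ᵥ* B.map f = 0) :
    z ᵥ* (kalmanMatrix A B).map f = 0 := by
  ext ⟨k, j⟩
  calc
    (z ᵥ* (kalmanMatrix A B).map f) (k, j) = (z ᵥ* (A.map f ^ (k : ℕ) * B.map f)) j := by
      simp only [vecMul, dotProduct, map_kalmanMatrix_apply]
    _ = 0 := by
      rw [← vecMul_vecMul, vecMul_pow_eq_pow_smul hA, smul_vecMul, hB, smul_zero, Pi.zero_apply]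

lemma KalmanRankCondition.vecMul_map_injective (hK : KalmanRankCondition A B)
    (R : Type*) [CommRing R] [IsDomain R] [Algebra ℝ R] :
    Function.Injective fun z : Fin d → R ↦ z ᵥ* (kalmanMatrix A B).map (algebraMap ℝ R) := by
  have hrows : LinearIndependent ℝ (kalmanMatrix A B).row :=
    (linearIndependent_row_iff_rank_eq_card _).2 (hK.trans (Fintype.card_fin d).symm)
  exact vecMul_injective_iff.2 (linearIndependent_algebraMap_comp_iff.2 hrows)

lemma KalmanRankCondition.eq_zero_of_vecMul_eq_smul (hK : KalmanRankCondition A B)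
    {R : Type*} [CommRing R] [IsDomain R] [Algebra ℝ R] {z : Fin d → R} {c : R}
    (hA : z ᵥ* A.map (algebraMap ℝ R) = c • z) (hB : z ᵥ* B.map (algebraMap ℝ R) = 0) :
    z = 0 :=
  hK.vecMul_map_injective R <| by
    simp only [vecMul_map_kalmanMatrix_eq_zero _ hA hB, zero_vecMul]

end Hautus

section Energy

lemma fromBlocks_mulVec_elim_eq_smul_iff {R m n : Type*} [Semiring R] [Fintype m] [Fintype n]
    {A : Matrix m m R} {B : Matrix m n R} {C : Matrix n m R} {D : Matrix n n R} {μ : R}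
    {x : m → R} {y : n → R} :
    fromBlocks A B C D *ᵥ Sum.elim x y = μ • Sum.elim x y ↔
      A *ᵥ x + B *ᵥ y = μ • x ∧ C *ᵥ x + D *ᵥ y = μ • y := by
  simp [fromBlocks_mulVec, funext_iff]

variable {n : Type*} [Fintype n]

lemma exists_mulVec_eq_smul_of_isRoot_charpoly {R : Type*} [CommRing R] [IsDomain R]
    [DecidableEq n] {M : Matrix n n R} {μ : R} (hμ : M.charpoly.IsRoot μ) :
    ∃ v ≠ 0, M *ᵥ v = μ • v := by
  rw [← charpoly_toLin', ← Module.End.hasEigenvalue_iff_isRoot_charpoly] at hμ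
  obtain ⟨v, hv⟩ := hμ.exists_hasEigenvector
  exact ⟨v, hv.2, hv.apply_eq_smul⟩

lemma dotProduct_mulVec_add_of_fromBlocks_mulVec_eq_smul {R : Type*} [CommRing R] [StarRing R]
    {A P Q : Matrix n n R} (hP : P.IsHermitian) {μ : R} {x y : n → R}
    (h : fromBlocks A Q P (-Aᴴ) *ᵥ Sum.elim x y = μ • Sum.elim x y) :
    star x ⬝ᵥ P *ᵥ x + star y ⬝ᵥ Q *ᵥ y = (μ + star μ) * (star y ⬝ᵥ x) := by
  obtain ⟨hx, hy⟩ := fromBlocks_mulVec_elim_eq_smul_iff.1 h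
  have hxy : star y ⬝ᵥ A *ᵥ x + star y ⬝ᵥ Q *ᵥ y = μ * (star y ⬝ᵥ x) := by
    rw [← dotProduct_add, hx, dotProduct_smul, smul_eq_mul]
  have hyx : star x ⬝ᵥ P *ᵥ x - star y ⬝ᵥ A *ᵥ x = star μ * (star y ⬝ᵥ x) := by
    have hstar := congrArg star hy
    simp only [star_add, star_mulVec, hP.eq, conjTranspose_neg, conjTranspose_conjTranspose,
      vecMul_neg, star_smul] at hstar
    rw [dotProduct_mulVec, dotProduct_mulVec, ← sub_dotProduct, sub_eq_add_neg, hstar,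
      smul_dotProduct, smul_eq_mul]
  linear_combination hxy + hyx

variable {𝕜 : Type*} [RCLike 𝕜] {A P Q : Matrix n n 𝕜} {μ : 𝕜}

open scoped ComplexOrder in
lemma mulVec_eq_zero_of_fromBlocks_mulVec_eq_smul (hP : P.PosSemidef) (hQ : Q.PosSemidef)
    (hμ : RCLike.re μ = 0) {x y : n → 𝕜}
    (h : fromBlocks A Q P (-Aᴴ) *ᵥ Sum.elim x y = μ • Sum.elim x y) :
    P *ᵥ x = 0 ∧ Q *ᵥ y = 0 := by
  have henergy : star x ⬝ᵥ P *ᵥ x + star y ⬝ᵥ Q *ᵥ y = 0 := by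
    rw [dotProduct_mulVec_add_of_fromBlocks_mulVec_eq_smul hP.isHermitian h, RCLike.star_def,
      RCLike.add_conj, hμ, RCLike.ofReal_zero, mul_zero, zero_mul]
  rwa [add_eq_zero_iff_of_nonneg (hP.dotProduct_mulVec_nonneg x) (hQ.dotProduct_mulVec_nonneg y),
    hP.dotProduct_mulVec_zero_iff, hQ.dotProduct_mulVec_zero_iff] at henergy

open scoped ComplexOrder in
lemma re_ne_zero_of_isRoot_charpoly_fromBlocks [DecidableEq n] (hP : P.PosSemidef)
    (hQ : Q.PosSemidef) (hAP : ∀ x, A *ᵥ x = μ • x → P *ᵥ x = 0 → x = 0)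
    (hAQ : ∀ y, Aᴴ *ᵥ y = -μ • y → Q *ᵥ y = 0 → y = 0)
    (hμ : (fromBlocks A Q P (-Aᴴ)).charpoly.IsRoot μ) : RCLike.re μ ≠ 0 := by
  intro hre
  obtain ⟨v, hv, h⟩ := exists_mulVec_eq_smul_of_isRoot_charpoly hμ
  rw [← Sum.elim_comp_inl_inr v] at hv h
  set x := v ∘ Sum.inl
  set y := v ∘ Sum.inr
  obtain ⟨hPx, hQy⟩ := mulVec_eq_zero_of_fromBlocks_mulVec_eq_smul hP hQ hre h
  obtain ⟨hx, hy⟩ := fromBlocks_mulVec_elim_eq_smul_iff.1 h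
  rw [hQy, add_zero] at hx
  rw [hPx, zero_add, neg_mulVec, neg_eq_iff_eq_neg, ← neg_smul] at hy
  rw [hAP x hx hPx, hAQ y hy hQy] at hv
  exact hv Sum.elim_zero_zero

end Energy

section Symplectic

variable {R n : Type*} [CommRing R] [Fintype n] [DecidableEq n]

lemma charpoly_neg_of_isSkewAdjoint {J M : Matrix n n R} (hJ : IsUnit J)
    (hM : J.IsSkewAdjoint M) : (-M).charpoly = M.charpoly := by
  obtain ⟨J, rfl⟩ := hJ
  have hconj : J.val * -M * J.val⁻¹ = Mᵀ := by
    rw [← hM, ← coe_units_inv, Units.mul_inv_cancel_right]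
  rw [← charpoly_units_conj J, hconj, charpoly_transpose]

lemma isSkewAdjoint_J_fromBlocks {A P Q : Matrix n n R} (hP : P.IsSymm) (hQ : Q.IsSymm) :
    (J n R).IsSkewAdjoint (fromBlocks A Q P (-Aᵀ)) := by
  simp [Matrix.IsSkewAdjoint, Matrix.IsAdjointPair, J, fromBlocks_transpose, fromBlocks_neg,
    fromBlocks_multiply, hP.eq, hQ.eq]

lemma isComplexEigenvalue_neg_iff {M : Matrix n n ℝ} {μ : ℂ} :
    (-M).IsComplexEigenvalue μ ↔ M.IsComplexEigenvalue (-μ) := by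
  have hmap : (-M).map Complex.ofReal = -M.map Complex.ofReal :=
    Matrix.map_neg _ Complex.ofReal_neg M
  rw [Matrix.IsComplexEigenvalue, Matrix.IsComplexEigenvalue, hmap,
    ← mem_spectrum_iff_isRoot_charpoly, ← mem_spectrum_iff_isRoot_charpoly, ← spectrum.neg_eq,
    Set.mem_neg]

lemma isComplexEigenvalue_congr_of_charpoly_eq {M N : Matrix n n ℝ}
    (h : M.charpoly = N.charpoly) {μ : ℂ} :
    M.IsComplexEigenvalue μ ↔ N.IsComplexEigenvalue μ := by
  have hmap : (M.map Complex.ofRealHom).charpoly = (N.map Complex.ofRealHom).charpoly := by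
    rw [charpoly_map, charpoly_map, h]
  exact iff_of_eq (congrArg (Polynomial.IsRoot · μ) hmap)

end Symplectic

section Hamiltonian

variable {d m : ℕ} (A : Matrix (Fin d) (Fin d) ℝ) (B : Matrix (Fin d) (Fin m) ℝ)

lemma charpoly_neg_hamiltonianMatrix :
    (-hamiltonianMatrix A B).charpoly = (hamiltonianMatrix A B).charpoly := by
  have hJ : IsUnit (J (Fin d) ℝ) := (isUnit_iff_isUnit_det _).2 (isUnit_det_J (Fin d) ℝ)
  have hB : (B * Bᵀ).IsSymm := by
    rw [Matrix.IsSymm, transpose_mul, transpose_transpose]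
  exact charpoly_neg_of_isSkewAdjoint hJ (isSkewAdjoint_J_fromBlocks isSymm_one hB)

lemma hamiltonianMatrix_map_ofReal :
    (hamiltonianMatrix A B).map Complex.ofReal =
      fromBlocks (A.map Complex.ofReal) (B.map Complex.ofReal * (B.map Complex.ofReal)ᴴ) 1
        (-(A.map Complex.ofReal)ᴴ) := by
  have hconj {k l : ℕ} (M : Matrix (Fin k) (Fin l) ℝ) :
      (M.map Complex.ofReal)ᴴ = Mᵀ.map Complex.ofReal := by
    ext
    simp
  have hmul : (B * Bᵀ).map Complex.ofReal = B.map Complex.ofReal * Bᵀ.map Complex.ofReal :=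
    Matrix.map_mul (f := Complex.ofRealHom)
  rw [hamiltonianMatrix, fromBlocks_map, hmul, hconj, hconj,
    Matrix.map_one _ Complex.ofReal_zero Complex.ofReal_one,
    Matrix.map_neg _ Complex.ofReal_neg]

variable {A B}

lemma KalmanRankCondition.eq_zero_of_conjTranspose_mulVec_eq_smul (hK : KalmanRankCondition A B)
    {y : Fin d → ℂ} {c : ℂ} (hA : (A.map Complex.ofReal)ᴴ *ᵥ y = c • y)
    (hB : (B.map Complex.ofReal)ᴴ *ᵥ y = 0) : y = 0 := by
  have hA' : star y ᵥ* A.map Complex.ofReal = star c • star y := by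
    rw [← star_smul, ← hA, star_mulVec, conjTranspose_conjTranspose]
  have hB' : star y ᵥ* B.map Complex.ofReal = 0 := by
    rw [← star_zero, ← hB, star_mulVec, conjTranspose_conjTranspose]
  exact star_eq_zero.1 (hK.eq_zero_of_vecMul_eq_smul hA' hB')

open scoped ComplexOrder in
lemma KalmanRankCondition.re_ne_zero_of_isComplexEigenvalue (hK : KalmanRankCondition A B) {μ : ℂ}
    (hμ : (hamiltonianMatrix A B).IsComplexEigenvalue μ) : μ.re ≠ 0 := by
  rw [Matrix.IsComplexEigenvalue, hamiltonianMatrix_map_ofReal] at hμ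
  refine re_ne_zero_of_isRoot_charpoly_fromBlocks .one (posSemidef_self_mul_conjTranspose _)
    (fun x _ hx ↦ one_mulVec x ▸ hx) (fun y hy hBy ↦ ?_) hμ
  exact hK.eq_zero_of_conjTranspose_mulVec_eq_smul hy
    ((self_mul_conjTranspose_mulVec_eq_zero _ y).1 hBy)

lemma isComplexEigenvalue_hamiltonianMatrix_neg_iff {μ : ℂ} :
    (hamiltonianMatrix A B).IsComplexEigenvalue (-μ) ↔
      (hamiltonianMatrix A B).IsComplexEigenvalue μ := by
  rw [← isComplexEigenvalue_neg_iff,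
    isComplexEigenvalue_congr_of_charpoly_eq (charpoly_neg_hamiltonianMatrix A B)]

end Hamiltonian

/-- under the Kalman rank condition, the Hamiltonian matrix
`𝕳 = [[A, BBᵀ],[I_d, −Aᵀ]]` is hyperbolic: every complex eigenvalue `μ` of `𝕳`
satisfies `Re(μ) ≠ 0`; moreover if `μ` is an eigenvalue of `𝕳`, so is `−μ`. -/
theorem hamiltonian_hyperbolic {d m : ℕ} (hd : 1 ≤ d) (hm : 1 ≤ m)
    (A : Matrix (Fin d) (Fin d) ℝ) (B : Matrix (Fin d) (Fin m) ℝ)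
    (hK : KalmanRankCondition A B) :
    (∀ μ : ℂ, (hamiltonianMatrix A B).IsComplexEigenvalue μ → μ.re ≠ 0) ∧
    (∀ μ : ℂ, (hamiltonianMatrix A B).IsComplexEigenvalue μ →
      (hamiltonianMatrix A B).IsComplexEigenvalue (-μ)) :=
  ⟨fun _ hμ ↦ hK.re_ne_zero_of_isComplexEigenvalue hμ,
    fun _ hμ ↦ isComplexEigenvalue_hamiltonianMatrix_neg_iff.2 hμ⟩

end
end

section
/- Let d, m ≥ 1, A ∈ ℝ^{d×d}, B ∈ ℝ^{d×m}, and let E₋, E₊ ∈ ℝ^{d×d} be symmetric matrices both solving the algebraic Riccati equation X A + Aᵀ X + X B Bᵀ X − I_d = 0, and assume E₊ − E₋ is invertible. Then (E₊ − E₋)(A + BBᵀE₊) + (A + BBᵀE₋)ᵀ(E₊ − E₋) = 0; consequently A + BBᵀE₊ = −(E₊ − E₋)^{−1}(A + BBᵀE₋)ᵀ(E₊ − E₋), so A + BBᵀE₊ is similar to −(A + BBᵀE₋)ᵀ, and hence μ ∈ ℂ is an eigenvalue of A + BBᵀE₊ if and only if −μ is an eigenvalue of A + BBᵀE₋. -/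
open Matrix

noncomputable section

/-!
Subtracting the two Riccati equations cancels the constant term, and the difference of the remaining
expressions factors as `D (A + S E₊) + (Aᵀ + E₋ S) D` with `D = E₊ - E₋` and `S = BBᵀ`. Symmetry of
`S` and `E₋` turns the second coefficient into `(A + S E₋)ᵀ`, so `D` conjugates `A + S E₊` into
`-(A + S E₋)ᵀ`, which has the same characteristic polynomial as `-(A + S E₋)`.
-/

theorem riccati_sub_riccati {R : Type*} [NonUnitalRing R] (a b s x y : R) :
    (x * a + b * x + x * s * x) - (y * a + b * y + y * s * y) =
      (x - y) * (a + s * x) + (b + y * s) * (x - y) := by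
  simp only [mul_add, add_mul, mul_sub, sub_mul, mul_assoc]
  abel

section

variable {n R : Type*} [Fintype n]

theorem transpose_add_mul_of_isSymm [NonUnitalCommSemiring R] {S E : Matrix n n R}
    (A : Matrix n n R) (hS : S.IsSymm) (hE : E.IsSymm) : (A + S * E)ᵀ = Aᵀ + E * S := by
  rw [transpose_add, transpose_mul, hS.eq, hE.eq]

theorem riccati_intertwining [NonUnitalCommRing R] {A S Q Eminus Eplus : Matrix n n R}
    (hS : S.IsSymm) (hEm_symm : Eminus.IsSymm)
    (hEm : Eminus * A + Aᵀ * Eminus + Eminus * S * Eminus - Q = 0)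
    (hEp : Eplus * A + Aᵀ * Eplus + Eplus * S * Eplus - Q = 0) :
    (Eplus - Eminus) * (A + S * Eplus) + (A + S * Eminus)ᵀ * (Eplus - Eminus) = 0 := by
  rw [transpose_add_mul_of_isSymm A hS hEm_symm, ← riccati_sub_riccati, sub_eq_zero]
  exact (sub_eq_zero.mp hEp).trans (sub_eq_zero.mp hEm).symm

variable [CommRing R] [DecidableEq n]

theorem eq_neg_inv_mul_mul_of_mul_add_mul_eq_zero {D M N : Matrix n n R} (hD : IsUnit D)
    (h : D * M + N * D = 0) : M = -(D⁻¹ * N * D) := by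
  have hdet : IsUnit D.det := (isUnit_iff_isUnit_det D).mp hD
  calc
    M = D⁻¹ * (D * M) := (nonsing_inv_mul_cancel_left D M hdet).symm
    _ = -(D⁻¹ * N * D) := by
      rw [eq_neg_of_add_eq_zero_left h, Matrix.mul_neg, Matrix.mul_assoc]

theorem charpoly_inv_mul_mul {D : Matrix n n R} (hD : IsUnit D) (M : Matrix n n R) :
    (D⁻¹ * M * D).charpoly = M.charpoly := by
  obtain ⟨u, rfl⟩ := hD
  simpa only [coe_units_inv] using charpoly_units_conj' u M

theorem isRoot_charpoly_neg_iff (M : Matrix n n R) (μ : R) :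
    (-M).charpoly.IsRoot μ ↔ M.charpoly.IsRoot (-μ) := by
  have hneg : scalar n μ - -M = -(scalar n (-μ) - M) := by
    rw [map_neg]
    abel
  rw [Polynomial.IsRoot.def, Polynomial.IsRoot.def, eval_charpoly, eval_charpoly, hneg, det_neg,
    (isUnit_one.neg.pow _).mul_right_eq_zero]

theorem charpoly_eq_charpoly_neg_of_intertwining {D M N : Matrix n n R} (hD : IsUnit D)
    (h : D * M + Nᵀ * D = 0) : M.charpoly = (-N).charpoly := by
  have hconj : M = D⁻¹ * (-N)ᵀ * D := by
    rw [eq_neg_inv_mul_mul_of_mul_add_mul_eq_zero hD h, transpose_neg, Matrix.mul_neg,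
      Matrix.neg_mul]
  rw [hconj, charpoly_inv_mul_mul hD, charpoly_transpose]

theorem isRoot_charpoly_map_iff_of_intertwining {L : Type*} [CommRing L] (f : R →+* L)
    {D M N : Matrix n n R} (hD : IsUnit D) (h : D * M + Nᵀ * D = 0) (μ : L) :
    (M.map f).charpoly.IsRoot μ ↔ (N.map f).charpoly.IsRoot (-μ) := by
  have hneg : (-N).map f = -N.map f := Matrix.map_neg _ (map_neg f) N
  rw [charpoly_map, charpoly_eq_charpoly_neg_of_intertwining hD h, ← charpoly_map, hneg,
    isRoot_charpoly_neg_iff]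

theorem riccati_eigenvalue_reflection_general {L : Type*} [CommRing L] (f : R →+* L)
    {A S Q Eminus Eplus : Matrix n n R} (hS : S.IsSymm) (hEm_symm : Eminus.IsSymm)
    (hEm : Eminus * A + Aᵀ * Eminus + Eminus * S * Eminus - Q = 0)
    (hEp : Eplus * A + Aᵀ * Eplus + Eplus * S * Eplus - Q = 0)
    (hinv : IsUnit (Eplus - Eminus)) :
    (Eplus - Eminus) * (A + S * Eplus) + (A + S * Eminus)ᵀ * (Eplus - Eminus) = 0 ∧
    A + S * Eplus = -((Eplus - Eminus)⁻¹ * (A + S * Eminus)ᵀ * (Eplus - Eminus)) ∧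
    (∀ μ : L, ((A + S * Eplus).map f).charpoly.IsRoot μ ↔
      ((A + S * Eminus).map f).charpoly.IsRoot (-μ)) :=
  have h := riccati_intertwining hS hEm_symm hEm hEp
  ⟨h, eq_neg_inv_mul_mul_of_mul_add_mul_eq_zero hinv h,
    isRoot_charpoly_map_iff_of_intertwining f hinv h⟩

end

/-- if `E₋, E₊` are symmetric solutions of the algebraic Riccati equation
`XA + AᵀX + XBBᵀX − I = 0` and `E₊ − E₋` is invertible, then
`(E₊ − E₋)(A + BBᵀE₊) + (A + BBᵀE₋)ᵀ(E₊ − E₋) = 0`; consequently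
`A + BBᵀE₊ = −(E₊ − E₋)⁻¹ (A + BBᵀE₋)ᵀ (E₊ − E₋)`, so `A + BBᵀE₊` is similar to
`−(A + BBᵀE₋)ᵀ`, and `μ` is an eigenvalue of `A + BBᵀE₊` iff `−μ` is an eigenvalue of
`A + BBᵀE₋`. -/
theorem riccati_eigenvalue_reflection {d m : ℕ} (hd : 1 ≤ d) (hm : 1 ≤ m)
    (A : Matrix (Fin d) (Fin d) ℝ) (B : Matrix (Fin d) (Fin m) ℝ)
    (Eminus Eplus : Matrix (Fin d) (Fin d) ℝ)
    (hEm_symm : Eminus.IsSymm) (hEp_symm : Eplus.IsSymm)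
    (hEm : Eminus * A + Aᵀ * Eminus + Eminus * B * Bᵀ * Eminus - 1 = 0)
    (hEp : Eplus * A + Aᵀ * Eplus + Eplus * B * Bᵀ * Eplus - 1 = 0)
    (hinv : IsUnit (Eplus - Eminus)) :
    (Eplus - Eminus) * (A + B * Bᵀ * Eplus) + (A + B * Bᵀ * Eminus)ᵀ * (Eplus - Eminus) = 0 ∧
    A + B * Bᵀ * Eplus = -((Eplus - Eminus)⁻¹ * (A + B * Bᵀ * Eminus)ᵀ * (Eplus - Eminus)) ∧
    (∀ μ : ℂ, (A + B * Bᵀ * Eplus).IsComplexEigenvalue μ ↔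
      (A + B * Bᵀ * Eminus).IsComplexEigenvalue (-μ)) := by
  have hS : (B * Bᵀ).IsSymm := by rw [IsSymm, transpose_mul, transpose_transpose]
  exact riccati_eigenvalue_reflection_general Complex.ofRealHom hS hEm_symm
    (by rwa [← Matrix.mul_assoc]) (by rwa [← Matrix.mul_assoc]) hinv

end
end

section
/- Let τ > 0, T₀ > 0, γ ∈ (0,1), and T ≥ 2(τ + T₀). Let g : [0,T] → [0,∞) be a function such that for every natural number n with 1 ≤ n ≤ (1/τ)(T/2 − T₀), one has g(t) ≤ (1/2)·γⁿ for all t ∈ [nτ, T − nτ]. Then, setting λ := (−ln γ)/(τ + T₀) > 0, for every t with τ + T₀ < t < T − (τ + T₀) one has g(t) ≤ (1/γ)·( e^{−λ t} + e^{−λ (T−t)} ). -/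
/-!
For `s = min t (T - t)` take `n = ⌊s / (τ + T₀)⌋₊`, which is at least `1`. Since
`n * (τ + T₀) ≤ s` and `n ≥ 1`, also `n * τ + T₀ ≤ s ≤ T / 2`, so the `n`-th bound is available
at `t`. Rounding `s / (τ + T₀)` down to `n` costs at most one factor `γ⁻¹`, whence
`γ ^ n ≤ γ⁻¹ * exp (-λ * s)`, and `exp (-λ * s)` is one of the two arcs.
-/

open Set Real

noncomputable section

section RealPow

variable {γ : ℝ}

lemma pow_natFloor_le_rpow_sub_one (hγ₀ : 0 < γ) (hγ₁ : γ ≤ 1) (x : ℝ) :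
    γ ^ ⌊x⌋₊ ≤ γ ^ (x - 1) := by
  rw [← rpow_natCast]
  exact rpow_le_rpow_of_exponent_ge hγ₀ hγ₁ (Nat.sub_one_lt_floor x).le

lemma rpow_div_sub_one_eq_exp_div (hγ₀ : 0 < γ) (s a : ℝ) :
    γ ^ (s / a - 1) = exp (-(-log γ / a) * s) / γ := by
  rw [rpow_sub_one hγ₀.ne', rpow_def_of_pos hγ₀]
  ring_nf

end RealPow

lemma exp_mul_min_le_add (c a b : ℝ) : exp (c * min a b) ≤ exp (c * a) + exp (c * b) := by
  rcases min_choice a b with h | h <;> rw [h]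
  · exact le_add_of_nonneg_right (exp_nonneg _)
  · exact le_add_of_nonneg_left (exp_nonneg _)

lemma natFloor_div_add_mul_add_le {τ T₀ s : ℝ} (hT₀ : 0 ≤ T₀) (ha : 0 < τ + T₀)
    (hs : τ + T₀ ≤ s) : ⌊s / (τ + T₀)⌋₊ * τ + T₀ ≤ s := by
  have one_le_floor : (1 : ℝ) ≤ ⌊s / (τ + T₀)⌋₊ :=
    mod_cast (Nat.one_le_floor_iff _).2 ((one_le_div ha).2 hs)
  calc ⌊s / (τ + T₀)⌋₊ * τ + T₀
      ≤ ⌊s / (τ + T₀)⌋₊ * τ + ⌊s / (τ + T₀)⌋₊ * T₀ := by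
        gcongr
        exact le_mul_of_one_le_left hT₀ one_le_floor
    _ = ⌊s / (τ + T₀)⌋₊ * (τ + T₀) := (mul_add _ _ _).symm
    _ ≤ s := (le_div_iff₀ ha).1 (Nat.floor_le (div_nonneg (ha.le.trans hs) ha.le))

lemma le_mul_exp_of_forall_le_mul_pow {τ T₀ γ C s y : ℝ} (hT₀ : 0 ≤ T₀) (ha : 0 < τ + T₀)
    (hγ₀ : 0 < γ) (hγ₁ : γ ≤ 1) (hC : 0 ≤ C) (hs : τ + T₀ ≤ s)
    (hy : ∀ n : ℕ, 1 ≤ n → n * τ + T₀ ≤ s → y ≤ C * γ ^ n) :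
    y ≤ C / γ * exp (-(-log γ / (τ + T₀)) * s) :=
  calc y ≤ C * γ ^ ⌊s / (τ + T₀)⌋₊ :=
        hy _ ((Nat.one_le_floor_iff _).2 ((one_le_div ha).2 hs))
          (natFloor_div_add_mul_add_le hT₀ ha hs)
    _ ≤ C * γ ^ (s / (τ + T₀) - 1) := by
        gcongr
        exact pow_natFloor_le_rpow_sub_one hγ₀ hγ₁ _
    _ = C / γ * exp (-(-log γ / (τ + T₀)) * s) := by
        rw [rpow_div_sub_one_eq_exp_div hγ₀, mul_div_left_comm, mul_comm]

theorem geometric_decay_to_exponential_turnpike_general {τ T₀ γ T C : ℝ}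
    (hτ : 0 < τ) (hT₀ : 0 ≤ T₀) (hγ₀ : 0 < γ) (hγ₁ : γ ≤ 1) (hC : 0 ≤ C) {g : ℝ → ℝ}
    (hg : ∀ n : ℕ, 1 ≤ n → (n : ℝ) ≤ (1 / τ) * (T / 2 - T₀) →
      ∀ t ∈ Icc (n * τ) (T - n * τ), g t ≤ C * γ ^ n)
    {t : ℝ} (ht : t ∈ Icc (τ + T₀) (T - (τ + T₀))) :
    g t ≤ C / γ * exp (-(-log γ / (τ + T₀)) * min t (T - t)) := by
  have min_le_half : min t (T - t) ≤ T / 2 := by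
    linarith [min_le_left t (T - t), min_le_right t (T - t)]
  refine le_mul_exp_of_forall_le_mul_pow hT₀ (by positivity) hγ₀ hγ₁ hC
    (le_min ht.1 (le_sub_comm.1 ht.2)) fun n hn hnτ ↦ hg n hn ?_ t ?_
  · rw [one_div_mul_eq_div, le_div_iff₀ hτ]
    linarith
  · have hn_min : n * τ ≤ min t (T - t) := by linarith
    exact ⟨hn_min.trans (min_le_left _ _), le_sub_comm.1 (hn_min.trans (min_le_right _ _))⟩

/-- from geometric decay on nested subintervals to the double-arc exponential
estimate: if `g : [0,T] → [0,∞)` satisfies `g ≤ (1/2)γⁿ` on `[nτ, T − nτ]` for every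
`1 ≤ n ≤ (1/τ)(T/2 − T₀)`, then with `λ := (−ln γ)/(τ + T₀) > 0` one has
`g(t) ≤ (1/γ)(e^{−λt} + e^{−λ(T−t)})` for all `τ + T₀ < t < T − (τ + T₀)`. -/
theorem geometric_decay_to_exponential_turnpike (τ T₀ γ T : ℝ)
    (hτ : 0 < τ) (hT₀ : 0 < T₀) (hγ₀ : 0 < γ) (hγ₁ : γ < 1)
    (hT : 2 * (τ + T₀) ≤ T)
    (g : ℝ → ℝ) (hg_nonneg : ∀ t ∈ Set.Icc (0 : ℝ) T, 0 ≤ g t)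
    (hg : ∀ n : ℕ, 1 ≤ n → (n : ℝ) ≤ (1 / τ) * (T / 2 - T₀) →
      ∀ t ∈ Set.Icc ((n : ℝ) * τ) (T - (n : ℝ) * τ), g t ≤ (1 / 2) * γ ^ n) :
    0 < (-Real.log γ) / (τ + T₀) ∧
    ∀ t : ℝ, τ + T₀ < t → t < T - (τ + T₀) →
      g t ≤ (1 / γ) *
        (Real.exp (-((-Real.log γ) / (τ + T₀)) * t) +
          Real.exp (-((-Real.log γ) / (τ + T₀)) * (T - t))) := by
  refine ⟨div_pos (neg_pos.2 (log_neg hγ₀ hγ₁)) (by positivity), fun t ht₁ ht₂ ↦ ?_⟩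
  refine (geometric_decay_to_exponential_turnpike_general hτ hT₀.le hγ₀ hγ₁.le one_half_pos.le hg
    ⟨ht₁.le, ht₂.le⟩).trans ?_
  gcongr
  · exact one_half_lt_one.le
  · exact exp_mul_min_le_add _ _ _

end
end
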